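/- On V = F_{q³} ⊗ F_q ⊗ F_{q³} ⊗ F_q ⊗ F_{q³} ⊗ F_q, writing X_i for the operator X acting in the i-th tensor factor (identity elsewhere), define ξ₂ = (1−q⁶)⁻¹ A⁺₁K₁⁻¹ and ξ₁ = (1−q²)⁻¹ (A⁻₁ a⁺₂k₂⁻¹ + [2]₁ K₁ a⁻₂ K₃⁻¹ a⁺₄k₄⁻¹ + K₁ (a⁻₂)²k₂⁻¹ A⁺₃K₃⁻¹ + K₁ k₂ a⁻₄k₄⁻² A⁺₅K₅⁻¹ + K₁ k₂ k₄⁻¹ K₅⁻¹ a⁺₆k₆⁻¹ + K₁ k₂ A⁻₃K₃⁻¹ (a⁺₄)²k₄⁻²), where [2]₁ = q + q⁻¹. In the renormalized basis |a,b,c,d,e,f⟩⟩ = D_a d_b D_c d_d D_e d_f |a⟩⊗|b⟩⊗|c⟩⊗|d⟩⊗|e⟩⊗|f⟩, where d_m = q^{−m(m−1)/2}(1−q²)^{−m} and D_m = q^{−3m(m−1)/2}(1−q⁶)^{−m}, these satisfy ξ₂|a,b,c,d,e,f⟩⟩ = |a+1,b,c,d,e,f⟩⟩ and ξ₁|a,b,c,d,e,f⟩⟩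 = −⟨1⟩[c]₂ q^{3a+b−3c+2} |a,b,c−1,d+2,e,f⟩⟩ + [3]₁[b−1]₁[b]₁ q^{3a−b+2} |a,b−2,c+1,d,e,f⟩⟩ + [3]₁[d]₁ q^{3a+b−2d+2} |a,b,c,d−1,e+1,f⟩⟩ + q^{3a+b−d−3e} |a,b,c,d,e,f+1⟩⟩ + [2]₁[b]₁ q^{3(a−c)} |a,b−1,c,d+1,e,f⟩⟩ + [a]₂ |a−1,b+1,c,d,e,f⟩⟩ (terms with a negative index are absent since their coefficients vanish). In particular ξ₁, ξ₂ act on the renormalized basis by exactly the same structure constants as left multiplication by e₁, e₂ on the PBW monomials b₁^a b₂^b b₃^c b₄^d b₅^e b₆^f of U_q⁺(G₂). -/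

import Mathlib

noncomputable section

/-- The base field `K = ℚ(q)`, rational functions over `ℚ`. -/
abbrev K : Type := RatFunc ℚ

/-- The indeterminate `q`. -/
def q : K := RatFunc.X

/-- `⟨m⟩ = q^m − q^{−m}`. -/
def qbra (m : ℕ) : K := q ^ m - q⁻¹ ^ m

/-- `[m]₁ = ⟨m⟩/⟨1⟩`. -/
def qn1 (m : ℕ) : K := qbra m / qbra 1

/-- `[m]₂ = ⟨3m⟩/⟨3⟩`. -/
def qn2 (m : ℕ) : K := qbra (3 * m) / qbra 3

/-- The Fock space with basis `|m⟩, m ∈ ℕ` (underlying both `F_q` and `F_{q³}`). -/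
abbrev F : Type := ℕ →₀ K

/-- The basis vector `|m⟩`. -/
def ket (m : ℕ) : F := Finsupp.single m 1

/-- On `F_q`, the operator `k : |m⟩ ↦ q^m |m⟩`. -/
def opK : Module.End K F := Finsupp.lift F K ℕ fun m => (q ^ m) • ket m

/-- The inverse `k⁻¹ : |m⟩ ↦ q^{−m} |m⟩`. -/
def opKInv : Module.End K F := Finsupp.lift F K ℕ fun m => (q ^ m)⁻¹ • ket m

/-- The raising operator `a⁺ = A⁺ : |m⟩ ↦ |m+1⟩`. -/
def opAp : Module.End K F := Finsupp.lift F K ℕ fun m => ket (m + 1)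

/-- On `F_q`, the lowering operator `a⁻ : |m⟩ ↦ (1 − q^{2m}) |m-1⟩` (killing `|0⟩`). -/
def opAm : Module.End K F := Finsupp.lift F K ℕ fun m => (1 - q ^ (2 * m)) • ket (m - 1)

/-- On `F_{q³}`, the operator `K : |m⟩ ↦ q^{3m} |m⟩`. -/
def opK3 : Module.End K F := Finsupp.lift F K ℕ fun m => (q ^ (3 * m)) • ket m

/-- The inverse `K⁻¹ : |m⟩ ↦ q^{−3m} |m⟩`. -/
def opK3Inv : Module.End K F := Finsupp.lift F K ℕ fun m => (q ^ (3 * m))⁻¹ • ket m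

/-- On `F_{q³}`, the lowering operator `A⁻ : |m⟩ ↦ (1 − q^{6m}) |m-1⟩` (killing `|0⟩`). -/
def opAm3 : Module.End K F := Finsupp.lift F K ℕ fun m => (1 - q ^ (6 * m)) • ket (m - 1)

open TensorProduct

/-- The tensor product `V = F_{q³} ⊗ F_q ⊗ F_{q³} ⊗ F_q ⊗ F_{q³} ⊗ F_q`. -/
abbrev V6 : Type := F ⊗[K] (F ⊗[K] (F ⊗[K] (F ⊗[K] (F ⊗[K] F))))

instance : AddCommGroup (F ⊗[K] (F ⊗[K] F)) := by
  exact @TensorProduct.addCommGroup K _ F (F ⊗[K] F) _ _ _ _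

instance : AddCommGroup (F ⊗[K] (F ⊗[K] (F ⊗[K] F))) := by
  exact @TensorProduct.addCommGroup K _ F (F ⊗[K] (F ⊗[K] F)) _ _ _ _

instance : AddCommGroup (F ⊗[K] (F ⊗[K] (F ⊗[K] (F ⊗[K] F)))) := by
  exact @TensorProduct.addCommGroup K _ F (F ⊗[K] (F ⊗[K] (F ⊗[K] F))) _ _ _ _

instance : AddCommGroup V6 := by
  exact @TensorProduct.addCommGroup K _ F (F ⊗[K] (F ⊗[K] (F ⊗[K] (F ⊗[K] F)))) _ _ _ _

/-- `f₁ ⊗ f₂ ⊗ f₃ ⊗ f₄ ⊗ f₅ ⊗ f₆` as an operator on `V`. -/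
def tens6 (f1 f2 f3 f4 f5 f6 : Module.End K F) : Module.End K V6 :=
  TensorProduct.map f1 (TensorProduct.map f2 (TensorProduct.map f3
    (TensorProduct.map f4 (TensorProduct.map f5 f6))))

/-- The operator `ξ₂ = (1−q⁶)⁻¹ A⁺₁K₁⁻¹`. -/
def xi2 : Module.End K V6 := (1 - q ^ 6)⁻¹ • tens6 (opAp * opK3Inv) 1 1 1 1 1

/-- The operator `ξ₁ = (1−q²)⁻¹ (A⁻₁ a⁺₂k₂⁻¹ + [2]₁ K₁ a⁻₂ K₃⁻¹ a⁺₄k₄⁻¹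
+ K₁ (a⁻₂)²k₂⁻¹ A⁺₃K₃⁻¹ + K₁ k₂ a⁻₄k₄⁻² A⁺₅K₅⁻¹ + K₁ k₂ k₄⁻¹ K₅⁻¹ a⁺₆k₆⁻¹
+ K₁ k₂ A⁻₃K₃⁻¹ (a⁺₄)²k₄⁻²)`, where `[2]₁ = q + q⁻¹`. -/
def xi1 : Module.End K V6 :=
  (1 - q ^ 2)⁻¹ •
    (tens6 opAm3 (opAp * opKInv) 1 1 1 1
      + (q + q⁻¹) • tens6 opK3 opAm opK3Inv (opAp * opKInv) 1 1
      + tens6 opK3 (opAm ^ 2 * opKInv) (opAp * opK3Inv) 1 1 1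
      + tens6 opK3 opK 1 (opAm * opKInv ^ 2) (opAp * opK3Inv) 1
      + tens6 opK3 opK 1 opKInv opK3Inv (opAp * opKInv)
      + tens6 opK3 opK (opAm3 * opK3Inv) (opAp ^ 2 * opKInv ^ 2) 1 1)

/-- The renormalization factor `d_m = q^{−m(m−1)/2}(1−q²)^{−m}`. -/
def dsm (m : ℕ) : K := (q ^ (m * (m - 1) / 2) * (1 - q ^ 2) ^ m)⁻¹

/-- The renormalization factor `D_m = q^{−3m(m−1)/2}(1−q⁶)^{−m}`. -/
def dbig (m : ℕ) : K := (q ^ (3 * (m * (m - 1) / 2)) * (1 - q ^ 6) ^ m)⁻¹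

/-- The renormalized basis vector
`|a,b,c,d,e,f⟩⟩ = D_a d_b D_c d_d D_e d_f |a⟩⊗|b⟩⊗|c⟩⊗|d⟩⊗|e⟩⊗|f⟩`. -/
def kett (a b c d e f : ℕ) : V6 :=
  (dbig a * dsm b * dbig c * dsm d * dbig e * dsm f) •
    (ket a ⊗ₜ[K] (ket b ⊗ₜ[K] (ket c ⊗ₜ[K] (ket d ⊗ₜ[K] (ket e ⊗ₜ[K] ket f)))))


theorem q_ne : q ≠ 0 := RatFunc.X_ne_zero

theorem one_sub_q_pow_ne (n : ℕ) (hn : n ≠ 0) : (1 - q ^ n : K) ≠ 0 := by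
  intro h
  have h1 : (Polynomial.X ^ n : Polynomial ℚ) = 1 := by
    apply RatFunc.algebraMap_injective ℚ
    rw [map_pow, RatFunc.algebraMap_X, map_one]
    exact (sub_eq_zero.mp h).symm
  have h2 := congrArg Polynomial.natDegree h1
  rw [Polynomial.natDegree_X_pow, Polynomial.natDegree_one] at h2
  exact hn h2

theorem lift_ket (g : ℕ → F) (m : ℕ) : (Finsupp.lift F K ℕ g) (ket m) = g m := by
  rw [ket, Finsupp.lift_apply, Finsupp.sum_single_index, one_smul]
  exact zero_smul K _

theorem opK_ket (m : ℕ) : opK (ket m) = (q ^ m) • ket m := by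
  exact lift_ket _ m
theorem opKInv_ket (m : ℕ) : opKInv (ket m) = (q ^ m)⁻¹ • ket m := by
  exact lift_ket _ m
theorem opAp_ket (m : ℕ) : opAp (ket m) = ket (m + 1) := by
  exact lift_ket _ m
theorem opAm_ket (m : ℕ) : opAm (ket m) = (1 - q ^ (2 * m)) • ket (m - 1) := by
  exact lift_ket _ m
theorem opK3_ket (m : ℕ) : opK3 (ket m) = (q ^ (3 * m)) • ket m := by
  exact lift_ket _ m
theorem opK3Inv_ket (m : ℕ) : opK3Inv (ket m) = (q ^ (3 * m))⁻¹ • ket m := by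
  exact lift_ket _ m
theorem opAm3_ket (m : ℕ) : opAm3 (ket m) = (1 - q ^ (6 * m)) • ket (m - 1) := by
  exact lift_ket _ m

/-- renormalized vector in `F_q` -/
def rk (m : ℕ) : F := dsm m • ket m
/-- renormalized vector in `F_{q³}` -/
def rK (m : ℕ) : F := dbig m • ket m

theorem tri_succ (m : ℕ) : (m + 1) * (m + 1 - 1) / 2 = m * (m - 1) / 2 + m := by
  rw [← Finset.sum_range_id, ← Finset.sum_range_id, Finset.sum_range_succ]

theorem dsm_succ (m : ℕ) : dsm m = dsm (m + 1) * (q ^ m * (1 - q ^ 2)) := by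
  have h1 := q_ne
  have h2 := one_sub_q_pow_ne 2 (by norm_num)
  unfold dsm
  rw [tri_succ, pow_add, pow_succ (1 - q ^ 2) m]
  field_simp

theorem dbig_succ (m : ℕ) : dbig m = dbig (m + 1) * (q ^ (3 * m) * (1 - q ^ 6)) := by
  have h1 := q_ne
  have h2 := one_sub_q_pow_ne 6 (by norm_num)
  unfold dbig
  rw [tri_succ, mul_add, pow_add, pow_succ (1 - q ^ 6) m]
  field_simp

theorem opK_rk (m : ℕ) : opK (rk m) = (q ^ m) • rk m := by
  rw [rk, map_smul, opK_ket, smul_comm]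
theorem opKInv_rk (m : ℕ) : opKInv (rk m) = (q ^ m)⁻¹ • rk m := by
  rw [rk, map_smul, opKInv_ket, smul_comm]
theorem opK3_rK (m : ℕ) : opK3 (rK m) = (q ^ (3 * m)) • rK m := by
  rw [rK, map_smul, opK3_ket, smul_comm]
theorem opK3Inv_rK (m : ℕ) : opK3Inv (rK m) = (q ^ (3 * m))⁻¹ • rK m := by
  rw [rK, map_smul, opK3Inv_ket, smul_comm]
theorem opAp_rk (m : ℕ) : opAp (rk m) = (q ^ m * (1 - q ^ 2)) • rk (m + 1) := by
  rw [rk, map_smul, opAp_ket, dsm_succ, rk, smul_smul, mul_comm]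
theorem opAp_rK (m : ℕ) : opAp (rK m) = (q ^ (3 * m) * (1 - q ^ 6)) • rK (m + 1) := by
  rw [rK, map_smul, opAp_ket, dbig_succ, rK, smul_smul, mul_comm]

theorem qbra_ne (m : ℕ) (hm : m ≠ 0) : qbra m ≠ 0 := by
  intro h
  apply one_sub_q_pow_ne (2 * m) (by omega)
  have h1 := q_ne
  unfold qbra at h
  rw [inv_pow] at h
  have h3 : q ^ m * (q ^ m - (q ^ m)⁻¹) = 0 := by rw [h, mul_zero]
  rw [mul_sub, mul_inv_cancel₀ (pow_ne_zero m h1)] at h3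
  rw [two_mul, pow_add]
  linear_combination -h3

theorem qbra_mul (m : ℕ) : q ^ m * qbra m = q ^ (2 * m) - 1 := by
  have h1 := q_ne
  unfold qbra
  rw [inv_pow, mul_sub, mul_inv_cancel₀ (pow_ne_zero m h1), two_mul, pow_add]

theorem opAm_rk (m : ℕ) : opAm (rk m) = qn1 m • rk (m - 1) := by
  rw [rk, map_smul, opAm_ket]
  cases m with
  | zero => simp [qn1, qbra]
  | succ n =>
    rw [Nat.add_sub_cancel, rk, dsm_succ n, smul_smul, smul_smul]
    congr 1
    have h1 := qbra_mul (n + 1)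
    have h2 := qbra_mul 1
    have h3 := qbra_ne 1 one_ne_zero
    rw [qn1]
    field_simp
    linear_combination (dsm (n+1) * qbra 1) * h1 - (dsm (n+1) * q ^ n * qbra (n+1)) * h2

theorem opAm3_rK (m : ℕ) : opAm3 (rK m) = qn2 m • rK (m - 1) := by
  rw [rK, map_smul, opAm3_ket]
  cases m with
  | zero => simp [qn2, qbra]
  | succ n =>
    rw [Nat.add_sub_cancel, rK, dbig_succ n, smul_smul, smul_smul]
    congr 1
    have h1 := qbra_mul (3 * (n + 1))
    have h2 := qbra_mul 3
    have h3 := qbra_ne 3 (by norm_num)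
    rw [qn2]
    field_simp
    linear_combination (dbig (n+1) * qbra 3) * h1 -
      (dbig (n+1) * q ^ (3 * n) * qbra (3 * (n+1))) * h2

theorem opApKInv_rk (m : ℕ) : (opAp * opKInv) (rk m) = (1 - q ^ 2) • rk (m + 1) := by
  have h1 := q_ne
  rw [Module.End.mul_apply, opKInv_rk, map_smul, opAp_rk, smul_smul]
  congr 1
  field_simp

theorem opApK3Inv_rK (m : ℕ) : (opAp * opK3Inv) (rK m) = (1 - q ^ 6) • rK (m + 1) := by
  have h1 := q_ne
  rw [Module.End.mul_apply, opK3Inv_rK, map_smul, opAp_rK, smul_smul]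
  congr 1
  field_simp

theorem opAm2_rk (m : ℕ) : (opAm ^ 2 * opKInv) (rk m)
    = ((q ^ m)⁻¹ * qn1 m * qn1 (m - 1)) • rk (m - 2) := by
  rw [Module.End.mul_apply, opKInv_rk, pow_two, Module.End.mul_apply, map_smul, map_smul,
    opAm_rk, map_smul, opAm_rk, smul_smul, smul_smul, Nat.sub_sub, mul_assoc]

theorem opAmKInv2_rk (m : ℕ) : (opAm * opKInv ^ 2) (rk m)
    = ((q ^ m)⁻¹ ^ 2 * qn1 m) • rk (m - 1) := by
  rw [Module.End.mul_apply, pow_two, Module.End.mul_apply, opKInv_rk, map_smul, opKInv_rk,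
    map_smul, map_smul, opAm_rk, smul_smul, smul_smul, pow_two, mul_assoc]

theorem opAm3K3Inv_rK (m : ℕ) : (opAm3 * opK3Inv) (rK m)
    = ((q ^ (3 * m))⁻¹ * qn2 m) • rK (m - 1) := by
  rw [Module.End.mul_apply, opK3Inv_rK, map_smul, opAm3_rK, smul_smul]

theorem opAp2_rk (m : ℕ) : (opAp ^ 2 * opKInv ^ 2) (rk m)
    = (q * (1 - q ^ 2) ^ 2) • rk (m + 2) := by
  have h1 := q_ne
  rw [Module.End.mul_apply, pow_two, pow_two, Module.End.mul_apply, Module.End.mul_apply,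
    opKInv_rk, map_smul, opKInv_rk,
    map_smul, map_smul, map_smul, map_smul, opAp_rk, map_smul, opAp_rk, smul_smul, smul_smul,
    smul_smul]
  congr 1
  field_simp
  ring

/-- pure tensors -/
def pt (x1 x2 x3 x4 x5 x6 : F) : V6 :=
  x1 ⊗ₜ[K] (x2 ⊗ₜ[K] (x3 ⊗ₜ[K] (x4 ⊗ₜ[K] (x5 ⊗ₜ[K] x6))))

theorem tens6_pt (f1 f2 f3 f4 f5 f6 : Module.End K F) (x1 x2 x3 x4 x5 x6 : F) :
    tens6 f1 f2 f3 f4 f5 f6 (pt x1 x2 x3 x4 x5 x6)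
      = pt (f1 x1) (f2 x2) (f3 x3) (f4 x4) (f5 x5) (f6 x6) := rfl

theorem pt_smul1 (r : K) (x1 x2 x3 x4 x5 x6 : F) :
    pt (r • x1) x2 x3 x4 x5 x6 = r • pt x1 x2 x3 x4 x5 x6 := by
  simp only [pt, TensorProduct.smul_tmul']
theorem pt_smul2 (r : K) (x1 x2 x3 x4 x5 x6 : F) :
    pt x1 (r • x2) x3 x4 x5 x6 = r • pt x1 x2 x3 x4 x5 x6 := by
  simp only [pt, ← TensorProduct.smul_tmul', TensorProduct.tmul_smul]
theorem pt_smul3 (r : K) (x1 x2 x3 x4 x5 x6 : F) :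
    pt x1 x2 (r • x3) x4 x5 x6 = r • pt x1 x2 x3 x4 x5 x6 := by
  simp only [pt, ← TensorProduct.smul_tmul', TensorProduct.tmul_smul]
theorem pt_smul4 (r : K) (x1 x2 x3 x4 x5 x6 : F) :
    pt x1 x2 x3 (r • x4) x5 x6 = r • pt x1 x2 x3 x4 x5 x6 := by
  simp only [pt, ← TensorProduct.smul_tmul', TensorProduct.tmul_smul]
theorem pt_smul5 (r : K) (x1 x2 x3 x4 x5 x6 : F) :
    pt x1 x2 x3 x4 (r • x5) x6 = r • pt x1 x2 x3 x4 x5 x6 := by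
  simp only [pt, ← TensorProduct.smul_tmul', TensorProduct.tmul_smul]
theorem pt_smul6 (r : K) (x1 x2 x3 x4 x5 x6 : F) :
    pt x1 x2 x3 x4 x5 (r • x6) = r • pt x1 x2 x3 x4 x5 x6 := by
  simp only [pt, TensorProduct.tmul_smul]

theorem kett_eq (a b c d e f : ℕ) :
    kett a b c d e f = pt (rK a) (rk b) (rK c) (rk d) (rK e) (rk f) := by
  rw [rK, rk, rK, rk, rK, rk, pt_smul1, pt_smul2, pt_smul3, pt_smul4, pt_smul5, pt_smul6,
    smul_smul, smul_smul, smul_smul, smul_smul, smul_smul]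
  simp only [kett, pt, mul_assoc]

theorem qn1_three : (1 - q ^ 2)⁻¹ * (1 - q ^ 6) = q ^ 2 * qn1 3 := by
  have h0 := q_ne
  have h1 := qbra_mul 1
  have h2 := qbra_mul 3
  have h3 := qbra_ne 1 one_ne_zero
  have h4 := one_sub_q_pow_ne 2 (by norm_num)
  rw [qn1]
  field_simp
  apply mul_left_cancel₀ h0
  linear_combination (1 - q ^ 6) * h1 - (1 - q ^ 2) * h2

theorem qn1_two : qn1 2 = q + q⁻¹ := by
  have h3 := qbra_ne 1 one_ne_zero
  rw [qn1, div_eq_iff h3, qbra, qbra]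
  ring

theorem qbra_one : q * (1 - q ^ 2) = - (q ^ 2 * qbra 1) := by
  have h1 := qbra_mul 1
  linear_combination q * h1

/-- the action of `ξ₁, ξ₂` on the renormalized basis reproduces the
structure constants of left multiplication by `e₁, e₂` on the PBW monomials
`b₁^a b₂^b b₃^c b₄^d b₅^e b₆^f` of `U_q⁺(G₂)`.  (Terms with a negative index appear
with vanishing coefficient, so truncated subtraction on `ℕ` realizes the convention.) -/
theorem statement19 (a b c d e f : ℕ) :
    xi2 (kett a b c d e f) = kett (a + 1) b c d e f ∧
    xi1 (kett a b c d e f)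
      = -(qbra 1 * qn2 c * q ^ (3 * (a : ℤ) + b - 3 * c + 2)) • kett a b (c - 1) (d + 2) e f
        + (qn1 3 * qn1 (b - 1) * qn1 b * q ^ (3 * (a : ℤ) - b + 2)) • kett a (b - 2) (c + 1) d e f
        + (qn1 3 * qn1 d * q ^ (3 * (a : ℤ) + b - 2 * d + 2)) • kett a b c (d - 1) (e + 1) f
        + (q ^ (3 * (a : ℤ) + b - d - 3 * e)) • kett a b c d e (f + 1)
        + (qn1 2 * qn1 b * q ^ (3 * ((a : ℤ) - c))) • kett a (b - 1) c (d + 1) e f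
        + qn2 a • kett (a - 1) (b + 1) c d e f := by
  have h0 := q_ne
  have h2 := one_sub_q_pow_ne 2 (by norm_num)
  have h6 := one_sub_q_pow_ne 6 (by norm_num)
  have hz : ∀ n : ℕ, q ^ (n : ℤ) = q ^ n := fun n => zpow_natCast q n
  simp only [kett_eq]
  constructor
  · rw [xi2, LinearMap.smul_apply, tens6_pt, opApK3Inv_rK, pt_smul1, smul_smul,
      inv_mul_cancel₀ h6, one_smul]
    rfl
  · have e1 : q ^ (3 * (a : ℤ) + b - 3 * c + 2)
        = q ^ (3 * a) * q ^ b * (q ^ (3 * c))⁻¹ * q ^ 2 := by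
      rw [zpow_add₀ h0, zpow_sub₀ h0, zpow_add₀ h0, div_eq_mul_inv]; norm_cast
    have e2 : q ^ (3 * (a : ℤ) - b + 2) = q ^ (3 * a) * (q ^ b)⁻¹ * q ^ 2 := by
      rw [zpow_add₀ h0, zpow_sub₀ h0, div_eq_mul_inv]; norm_cast
    have e3 : q ^ (3 * (a : ℤ) + b - 2 * d + 2)
        = q ^ (3 * a) * q ^ b * (q ^ d)⁻¹ ^ 2 * q ^ 2 := by
      rw [zpow_add₀ h0, zpow_sub₀ h0, zpow_add₀ h0, div_eq_mul_inv, inv_pow, ← pow_mul,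
        mul_comm d 2]; norm_cast
    have e4 : q ^ (3 * (a : ℤ) + b - d - 3 * e)
        = q ^ (3 * a) * q ^ b * (q ^ d)⁻¹ * (q ^ (3 * e))⁻¹ := by
      rw [zpow_sub₀ h0, zpow_sub₀ h0, zpow_add₀ h0, div_eq_mul_inv, div_eq_mul_inv]; norm_cast
    have e5 : q ^ (3 * ((a : ℤ) - c)) = q ^ (3 * a) * (q ^ (3 * c))⁻¹ := by
      rw [mul_sub, zpow_sub₀ h0, div_eq_mul_inv]; norm_cast
    rw [e1, e2, e3, e4, e5, qn1_two]
    have key : (1 - q ^ 2)⁻¹ * (1 - q ^ 2) = 1 := inv_mul_cancel₀ h2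
    have k3 := qn1_three
    have kb := qbra_one
    simp only [xi1, LinearMap.smul_apply, LinearMap.add_apply, tens6_pt, opApK3Inv_rK,
      opApKInv_rk, opAm2_rk, opAmKInv2_rk, opAm3K3Inv_rK, opAp2_rk, opAm_rk, opAm3_rK, opK_rk,
      opKInv_rk, opK3_rK, opK3Inv_rK, Module.End.one_apply, pt_smul1, pt_smul2, pt_smul3,
      pt_smul4, pt_smul5, pt_smul6, smul_add, smul_smul]
    generalize (1 - q ^ 2)⁻¹ = u at *
    generalize pt (rK (a - 1)) _ _ _ _ _ = v1
    generalize pt _ (rk (b - 1)) _ _ _ _ = v2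
    generalize pt _ (rk (b - 2)) _ _ _ _ = v3
    generalize pt _ _ _ (rk (d - 1)) _ _ = v4
    generalize pt _ _ _ _ _ (rk (f + 1)) = v5
    generalize pt _ _ _ (rk _) _ _ = v6
    have t1 : ∀ x y z w p r x' y' z' w' p' r' : K, x = r' → y = p' → z = y' → w = z' → p = w' →
        r = x' → x • v1 + y • v2 + z • v3 + w • v4 + p • v5 + r • v6
        = x' • v6 + y' • v3 + z' • v4 + w' • v5 + p' • v2 + r' • v1 := by
      rintro x y z w p r _ _ _ _ _ _ rfl rfl rfl rfl rfl rfl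
      abel
    apply t1
    · linear_combination (qn2 a) * key
    · linear_combination ((q + q⁻¹) * qn1 b * q ^ (3 * a) * (q ^ (3 * c))⁻¹) * key
    · linear_combination (q ^ (3 * a) * (q ^ b)⁻¹ * qn1 b * qn1 (b - 1)) * k3
    · linear_combination (q ^ (3 * a) * q ^ b * (q ^ d)⁻¹ ^ 2 * qn1 d) * k3
    · linear_combination (q ^ (3 * a) * q ^ b * (q ^ d)⁻¹ * (q ^ (3 * e))⁻¹) * key
    · linear_combination (q ^ (3 * a) * q ^ b * (q ^ (3 * c))⁻¹ * qn2 c) * kb +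
        (q ^ (3 * a) * q ^ b * (q ^ (3 * c))⁻¹ * qn2 c * q * (1 - q ^ 2)) * key
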